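/- (Real Nullstellensatz) For any ideal I in ℝ[X₁,...,Xₙ], the ideal of all polynomials vanishing on the real zero set Z(I) equals the real radical ʳ√I of I. -/

import Mathlib

/-- The zero set of an ideal of real polynomials. -/
def zeroSet (n : ℕ) (I : Ideal (MvPolynomial (Fin n) ℝ)) : Set (Fin n → ℝ) :=
  {x | ∀ g ∈ I, MvPolynomial.eval x g = 0}

/-- The real radical of an ideal. -/
def realRadical (n : ℕ) (I : Ideal (MvPolynomial (Fin n) ℝ)) : Set (MvPolynomial (Fin n) ℝ) :=
  {g | ∃ k : ℕ, 1 ≤ k ∧ ∃ (ℓ : ℕ) (gi : Fin ℓ → MvPolynomial (Fin n) ℝ),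
    g ^ (2 * k) + ∑ i, (gi i) ^ 2 ∈ I}

/-!
Let `R` be real closed and suppose that no `g ^ (2 * k) + ∑ i, gᵢ ^ 2` lies in `I`. Then `-1` is not
a sum of squares in the localisation of `R[X₁, …, Xₙ] ⧸ I` at `g`, so by Artin and Schreier this
ring maps to a real closed field `L ⊇ R`, where the images of the `Xᵢ` form a zero of `I` at which
`g` does not vanish. It remains to bring this point down to `R` (Artin–Lang). Rabinowitsch's trick
and a sum of squares of generators reduce this to finding a zero of a single polynomial.

The descent removes one transcendental `t ∈ L` at a time. For each finite set of polynomials over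
`R` some `c ∈ R` gives them the signs that they have at `t`; hence, along a suitable ultrafilter on
`R`, the identity of `R` represents an element of the ultrapower whose polynomials have the same
signs as those of `t`, and `R(t)` embeds in the ultrapower compatibly with the order. By Hermite's
computation of the signature of the trace form, whether a finite extension of `R(t)` maps to a real
closed field over `R(t)` depends only on the order induced on `R(t)`. So the finite extension
generated by the given point also maps to the ultrapower, which is real closed, and evaluating
representatives at a single index yields a zero in `R`.
-/

universe u

section SumsOfSquares

theorem isSumSq_map {A B : Type*} [NonAssocSemiring A] [NonAssocSemiring B] (φ : A →+* B)
    {s : A} (hs : IsSumSq s) : IsSumSq (φ s) := by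
  induction hs with
  | zero => simp
  | sq_add a _ ih => simpa using ih.sq_add (φ a)

theorem isSemireal_of_ringHom {A B : Type*} [NonAssocSemiring A] [NonAssocSemiring B] (φ : A →+* B)
    [IsSemireal B] : IsSemireal A where
  one_add_ne_zero hs h :=
    IsSemireal.one_add_ne_zero (isSumSq_map φ hs) (by simpa using congrArg φ h)

theorem isSumSq_iff_exists_sum_sq {A : Type*} [CommSemiring A] {s : A} :
    IsSumSq s ↔ ∃ (ℓ : ℕ) (f : Fin ℓ → A), s = ∑ i, f i ^ 2 := by
  refine ⟨fun hs ↦ ?_, ?_⟩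
  · induction hs with
    | zero => exact ⟨0, Fin.elim0, by simp⟩
    | sq_add a _ ih =>
      obtain ⟨ℓ, f, rfl⟩ := ih
      exact ⟨ℓ + 1, Fin.cons a f, by simp [Fin.sum_univ_succ, sq]⟩
  · rintro ⟨ℓ, f, rfl⟩
    exact .sum_sq _ _

theorem exists_isSumSq_map_eq {A B : Type*} [NonAssocSemiring A] [NonAssocSemiring B]
    {φ : A →+* B} (hφ : Function.Surjective φ) {s : B} (hs : IsSumSq s) :
    ∃ s' : A, IsSumSq s' ∧ φ s' = s := by
  induction hs with
  | zero => exact ⟨0, .zero, map_zero φ⟩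
  | sq_add b _ ih =>
    obtain ⟨a, rfl⟩ := hφ b
    obtain ⟨s', hs', rfl⟩ := ih
    exact ⟨a * a + s', hs'.sq_add a, by simp⟩

theorem exists_isSumSq_algebraMap_eq_mul {A B : Type*} [CommRing A] [CommRing B] [Algebra A B]
    (M : Submonoid A) [IsLocalization M B] {s : B} (hs : IsSumSq s) :
    ∃ t ∈ M, ∃ s' : A, IsSumSq s' ∧ algebraMap A B s' = algebraMap A B (t * t) * s := by
  induction hs with
  | zero => exact ⟨1, M.one_mem, 0, .zero, by simp⟩
  | sq_add b _ ih =>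
    obtain ⟨t, ht, s', hs', h⟩ := ih
    obtain ⟨⟨a, u⟩, hu⟩ := IsLocalization.surj M b
    refine ⟨t * u, M.mul_mem ht u.2, a * t * (a * t) + u * u * s',
      ((IsSumSq.mul_self _).mul hs').sq_add _, ?_⟩
    simp only [map_add, map_mul] at h hu ⊢
    rw [h, ← hu]
    ring

theorem isSemireal_localizationAway {A : Type*} [CommRing A] {g : A}
    (h : ∀ k s, IsSumSq s → g ^ (2 * k) + s ≠ 0) :
    IsSemireal (Localization.Away g) where
  one_add_ne_zero {s} hs hs1 := by
    obtain ⟨_, ⟨k, rfl⟩, s', hs', hk⟩ := exists_isSumSq_algebraMap_eq_mul (.powers g) hs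
    have h0 : algebraMap A (Localization.Away g) (g ^ k * g ^ k + s') = 0 := by
      rw [map_add, hk, ← mul_one_add, hs1, mul_zero]
    obtain ⟨⟨_, j, rfl⟩, hj⟩ := (IsLocalization.map_eq_zero_iff (.powers g) _ _).1 h0
    refine h (k + j) (g ^ j * g ^ j * s') ((IsSumSq.mul_self _).mul hs') ?_
    linear_combination g ^ j * hj

theorem exists_ringHom_semireal_field (A : Type u) [CommRing A] [IsSemireal A] :
    ∃ (κ : Type u) (_ : Field κ), IsSemireal κ ∧ Nonempty (A →+* κ) := by
  let T : Submonoid A :=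
    { carrier := {t | ∃ s, IsSumSq s ∧ t = 1 + s}
      one_mem' := ⟨0, .zero, by simp⟩
      mul_mem' := by
        rintro _ _ ⟨s, hs, rfl⟩ ⟨t, ht, rfl⟩
        exact ⟨s + t + s * t, (hs.add ht).add (hs.mul ht), by ring⟩ }
  have : Nontrivial (Localization T) := by
    rw [← not_subsingleton_iff_nontrivial, IsLocalization.subsingleton_iff (M := T)]
    rintro ⟨s, hs, h⟩
    exact IsSemireal.one_add_ne_zero hs h.symm
  obtain ⟨m, hm⟩ := Ideal.exists_maximal (Localization T)
  let _ : Field (Localization T ⧸ m) := Ideal.Quotient.field m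
  refine ⟨Localization T ⧸ m, inferInstance, ⟨fun hs h ↦ ?_⟩,
    ⟨(Ideal.Quotient.mk m).comp (algebraMap A (Localization T))⟩⟩
  obtain ⟨b, hb, rfl⟩ := exists_isSumSq_map_eq Ideal.Quotient.mk_surjective hs
  obtain ⟨_, ⟨r, hr, rfl⟩, s, hs', hbs⟩ := exists_isSumSq_algebraMap_eq_mul T hb
  have hmem : (1 + r) * (1 + r) + s ∈ T :=
    ⟨r + r + r * r + s, ((hr.add hr).add (.mul_self r)).add hs', by ring⟩
  have hunit := (IsLocalization.map_units (Localization T) ⟨_, hmem⟩).map (Ideal.Quotient.mk m)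
  apply hunit.ne_zero
  rw [map_add, hbs, ← mul_one_add, map_mul, map_add, map_one, h, mul_zero]

instance isFormallyReal_of_isSemireal {K : Type*} [Field K] [IsSemireal K] : IsFormallyReal K :=
  .of_eq_zero_of_eq_zero_of_mul_self_add fun {s a} hs h ↦ by
    by_contra ha
    refine IsSemireal.one_add_ne_zero ((IsSumSq.mul_self a⁻¹).mul hs) ?_
    linear_combination a⁻¹ * a⁻¹ * h - (a * a⁻¹ + 1) * mul_inv_cancel₀ ha

end SumsOfSquares

theorem exists_linearOrder_isStrictOrderedRing (R : Type*) [Field R] [IsRealClosed R] :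
    ∃ _ : LinearOrder R, IsStrictOrderedRing R := by
  classical
  let C : RingCone R :=
    { Subsemiring.sumSq R with
      eq_zero_of_mem_of_neg_mem' := fun h h' ↦
        IsFormallyReal.eq_zero_of_isSumSq_of_neg_isSumSq (by simpa using h) (by simpa using h') }
  have : HasMemOrNegMem C :=
    ⟨fun x ↦ (IsRealClosed.isSquare_or_isSquare_neg x).imp
      (fun h ↦ Subsemiring.mem_sumSq.2 h.isSumSq) (fun h ↦ Subsemiring.mem_sumSq.2 h.isSumSq)⟩
  let _ : LinearOrder R := .mkOfAddGroupCone C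
  have : IsOrderedRing R := .mkOfCone C
  exact ⟨inferInstance, IsOrderedRing.toIsStrictOrderedRing R⟩

section ArtinSchreier

open Polynomial

theorem exists_irreducible_dvd_of_odd_natDegree {E : Type*} [Field E] {f : E[X]}
    (hf : Odd f.natDegree) : ∃ g, Irreducible g ∧ g ∣ f ∧ Odd g.natDegree := by
  induction f using WfDvdMonoid.induction_on_irreducible with
  | zero => simp at hf
  | unit f hu => simp [natDegree_eq_zero_of_isUnit hu] at hf
  | mul f g hf0 hg ih =>
    by_cases hodd : Odd g.natDegree
    · exact ⟨g, hg, dvd_mul_right g f, hodd⟩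
    · rw [natDegree_mul hg.ne_zero hf0, add_comm] at hf
      obtain ⟨h, hh, hdvd, hhodd⟩ := ih ((Nat.odd_add.1 hf).2 (Nat.not_odd_iff_even.1 hodd))
      exact ⟨h, hh, hdvd.mul_left g, hhodd⟩

theorem isSumSq_leadingCoeff_and_even_natDegree {E : Type*} [CommRing E] [IsDomain E]
    [IsFormallyReal E] {p : E[X]} (hp : IsSumSq p) :
    IsSumSq p.leadingCoeff ∧ Even p.natDegree := by
  induction hp with
  | zero => simp
  | @sq_add a s _ ih =>
    obtain rfl | ha := eq_or_ne a 0
    · simpa using ih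
    have hlc : IsSumSq (a * a).leadingCoeff := leadingCoeff_mul a a ▸ .mul_self _
    have hdeg : Even (a * a).natDegree := natDegree_mul ha ha ▸ Even.add_self _
    rcases lt_trichotomy (a * a).degree s.degree with h | h | h
    · rw [leadingCoeff_add_of_degree_lt h, natDegree_add_eq_right_of_degree_lt h]
      exact ih
    · have hne : (a * a).leadingCoeff + s.leadingCoeff ≠ 0 := fun h0 ↦ by
        simpa [ha] using IsFormallyReal.eq_zero_of_add_right hlc ih.1 h0
      rw [leadingCoeff_add_of_degree_eq h hne, natDegree,
        degree_add_eq_of_leadingCoeff_add_ne_zero hne, ← h, max_self]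
      exact ⟨hlc.add ih.1, hdeg⟩
    · rw [leadingCoeff_add_of_degree_lt' h, natDegree_add_eq_left_of_degree_lt h]
      exact ⟨hlc, hdeg⟩

theorem exists_isSumSq_mk_eq {E : Type*} [Field E] {f : E[X]} (hf : f.natDegree ≠ 0)
    {x : AdjoinRoot f} (hx : IsSumSq x) :
    ∃ s : E[X], IsSumSq s ∧ s.natDegree ≤ 2 * (f.natDegree - 1) ∧ AdjoinRoot.mk f s = x := by
  induction hx with
  | zero => exact ⟨0, .zero, by simp, map_zero _⟩
  | sq_add a _ ih =>
    obtain ⟨p, rfl⟩ := AdjoinRoot.mk_surjective a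
    obtain ⟨s, hs, hdeg, rfl⟩ := ih
    have hmod : AdjoinRoot.mk f (p % f) = AdjoinRoot.mk f p :=
      AdjoinRoot.mk_eq_mk.2 ⟨-(p / f), by linear_combination EuclideanDomain.mod_add_div p f⟩
    have hlt := natDegree_mod_lt p hf
    refine ⟨p % f * (p % f) + s, hs.sq_add _, ?_, by simp [hmod]⟩
    refine (natDegree_add_le _ _).trans (max_le (natDegree_mul_le.trans ?_) hdeg)
    lia

/-- Springer's descent: if `1 + s = f * q` with `deg s ≤ 2 (deg f - 1)`, then `q` has odd degree
less than `deg f`, so an irreducible factor of `q` of odd degree is a smaller counterexample. -/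
theorem isSemireal_adjoinRoot_of_odd_natDegree {E : Type*} [Field E] [IsSemireal E] {f : E[X]}
    (hf : Irreducible f) (hodd : Odd f.natDegree) : IsSemireal (AdjoinRoot f) where
  one_add_ne_zero {x} hx h1x := by
    induction hn : f.natDegree using Nat.strong_induction_on generalizing f with
    | _ n ih =>
    subst hn
    obtain ⟨s, hs, hdeg, rfl⟩ := exists_isSumSq_mk_eq hodd.pos.ne' hx
    obtain ⟨q, hq⟩ : f ∣ 1 + s := AdjoinRoot.mk_eq_zero.1 (by simpa using h1x)
    have h1s : IsSumSq (1 + s) := .add .one hs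
    have hdeg' : (1 + s).natDegree ≤ 2 * (f.natDegree - 1) :=
      (natDegree_add_le _ _).trans (by simpa using hdeg)
    have hne : 1 + s ≠ 0 := by
      have := isSemireal_of_ringHom (evalRingHom (0 : E))
      exact IsSemireal.one_add_ne_zero hs
    have hq0 : q ≠ 0 := fun h ↦ hne (by simp [hq, h])
    have heven := (isSumSq_leadingCoeff_and_even_natDegree h1s).2
    rw [hq, natDegree_mul hf.ne_zero hq0] at heven hdeg'
    obtain ⟨g, hg, hgq, hgodd⟩ := exists_irreducible_dvd_of_odd_natDegree (f := q) (by grind)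
    have hlt : g.natDegree < f.natDegree := by
      have := natDegree_le_of_dvd hgq hq0
      have := hodd.pos
      lia
    refine ih _ hlt hg hgodd (isSumSq_map (AdjoinRoot.mk g) hs) ?_ rfl
    rw [← map_one (AdjoinRoot.mk g), ← map_add, AdjoinRoot.mk_eq_zero, hq]
    exact hgq.mul_left f

theorem exists_isSumSq_re_eq {E : Type*} [CommRing E] {a : E} {z : QuadraticAlgebra E a 0}
    (hz : IsSumSq z) : ∃ s t, IsSumSq s ∧ IsSumSq t ∧ z.re = s + a * t := by
  induction hz with
  | zero => exact ⟨0, 0, .zero, .zero, by simp⟩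
  | sq_add w _ ih =>
    obtain ⟨s, t, hs, ht, h⟩ := ih
    refine ⟨w.re * w.re + s, w.im * w.im + t, hs.sq_add _, ht.sq_add _, ?_⟩
    rw [QuadraticAlgebra.re_add, QuadraticAlgebra.re_mul, h]
    ring

theorem isSumSq_neg_of_not_isSemireal {E : Type*} [Field E] [IsSemireal E] {a : E}
    (ha : ¬ IsSemireal (QuadraticAlgebra E a 0)) : IsSumSq (-a) := by
  rw [isSemireal_iff_not_isSumSq_neg_one, not_not] at ha
  obtain ⟨s, t, hs, ht, hst⟩ := exists_isSumSq_re_eq ha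
  have hst' : 1 + s + a * t = 0 := by
    simp only [QuadraticAlgebra.re_neg, QuadraticAlgebra.re_one] at hst
    linear_combination -hst
  have ht0 : t ≠ 0 := by
    rintro rfl
    exact IsSemireal.one_add_ne_zero hs (by simpa using hst')
  have key : -a = (1 + s) * t * (t⁻¹ * t⁻¹) := by
    field_simp
    linear_combination -hst'
  exact key ▸ ((IsSumSq.one.add hs).mul ht).mul (.mul_self _)

theorem isRealClosed_of_forall_surjective {E : Type u} [Field E] [IsSemireal E]
    (hE : ∀ (K : Type u) [Field K] [Algebra E K] [FiniteDimensional E K] [IsSemireal K],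
      Function.Surjective (algebraMap E K)) : IsRealClosed E where
  isSquare_or_isSquare_neg a := by
    have isSquare_or_isSumSq_neg (a : E) : IsSquare a ∨ IsSumSq (-a) := by
      refine or_iff_not_imp_left.2 fun ha ↦ isSumSq_neg_of_not_isSemireal fun _ ↦ ?_
      have : Fact (∀ r : E, r ^ 2 ≠ a + 0 * r) :=
        ⟨fun r hr ↦ ha ⟨r, by linear_combination -hr⟩⟩
      obtain ⟨r, hr⟩ := hE (QuadraticAlgebra E a 0) ⟨0, 1⟩
      simpa using congrArg QuadraticAlgebra.im hr
    refine (isSquare_or_isSumSq_neg a).imp_right fun ha ↦ ?_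
    obtain h | h := isSquare_or_isSumSq_neg (-a)
    · exact h
    · rw [IsFormallyReal.eq_zero_of_isSumSq_of_neg_isSumSq ha h]
      exact .zero
  exists_isRoot_of_odd_natDegree {f} hf := by
    obtain ⟨g, hg, hgf, hodd⟩ := exists_irreducible_dvd_of_odd_natDegree hf
    have : Fact (Irreducible g) := ⟨hg⟩
    have := isSemireal_adjoinRoot_of_odd_natDegree hg hodd
    have : FiniteDimensional E (AdjoinRoot g) := (AdjoinRoot.powerBasis hg.ne_zero).finite
    obtain ⟨x, hx⟩ := hE (AdjoinRoot g) (AdjoinRoot.root g)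
    refine ⟨x, IsRoot.dvd ?_ hgf⟩
    apply (algebraMap E (AdjoinRoot g)).injective
    rw [← eval₂_at_apply, hx, map_zero]
    exact AdjoinRoot.eval₂_root g

theorem isSemireal_iSup_of_directed {F Ω ι : Type*} [Field F] [Field Ω] [Algebra F Ω] [Nonempty ι]
    {E : ι → IntermediateField F Ω} (hE : Directed (· ≤ ·) E) (h : ∀ i, IsSemireal (E i)) :
    IsSemireal ↥(⨆ i, E i) where
  one_add_ne_zero {s} hs h1s := by
    obtain ⟨ℓ, f, rfl⟩ := isSumSq_iff_exists_sum_sq.1 hs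
    have hf (j : Fin ℓ) : ∃ i, (f j : Ω) ∈ E i := by
      have hmem := (f j).2
      rwa [← SetLike.mem_coe, IntermediateField.coe_iSup_of_directed hE, Set.mem_iUnion] at hmem
    choose i hi using hf
    obtain ⟨k, hk⟩ := hE.finite_le i
    let g (j : Fin ℓ) : E k := ⟨f j, hk j (hi j)⟩
    refine IsSemireal.one_add_ne_zero (IsSumSq.sum_sq Finset.univ g) (Subtype.ext ?_)
    simpa [g] using congrArg (algebraMap ↥(⨆ i, E i) Ω) h1s

theorem exists_isRealClosed_extension (κ : Type u) [Field κ] [IsSemireal κ] :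
    ∃ (L : Type u) (_ : Field L) (_ : Algebra κ L), IsRealClosed L := by
  let Ω := AlgebraicClosure κ
  obtain ⟨E, -, hE⟩ := zorn_le_nonempty₀ {E : IntermediateField κ Ω | IsSemireal E}
    (fun c hc hchain E₀ hE₀ ↦ by
      have : Nonempty c := ⟨⟨E₀, hE₀⟩⟩
      exact ⟨_, isSemireal_iSup_of_directed (E := ((↑) : c → IntermediateField κ Ω))
        hchain.directed fun E ↦ hc E.2, fun E hE ↦ le_iSup_of_le ⟨E, hE⟩ le_rfl⟩)
    ⊥ (isSemireal_of_ringHom (IntermediateField.botEquiv κ Ω : _ →+* κ))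
  have : IsSemireal E := hE.prop
  refine ⟨E, inferInstance, inferInstance,
    isRealClosed_of_forall_surjective fun K _ _ _ _ x ↦ ?_⟩
  let φ : K →ₐ[E] Ω := IsAlgClosed.lift
  let K' : IntermediateField κ Ω := φ.fieldRange.restrictScalars κ
  have hK' : IsSemireal K' := isSemireal_of_ringHom
    ((AlgEquiv.ofInjectiveField φ).symm : φ.range →+* K)
  have hEK' : E ≤ K' := fun y hy ↦ ⟨algebraMap E K ⟨y, hy⟩, φ.commutes _⟩
  have hx : φ x ∈ E := hE.le_of_ge hK' hEK' ⟨x, rfl⟩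
  exact ⟨⟨φ x, hx⟩, φ.injective (φ.commutes _)⟩

theorem isRealClosed_of_algebraic_mem_range {R L : Type*} [Field R] [Field L] [IsRealClosed L]
    [Algebra R L] (h : ∀ x : L, IsAlgebraic R x → x ∈ (algebraMap R L).range) :
    IsRealClosed R where
  toIsSemireal := isSemireal_of_ringHom (algebraMap R L)
  isSquare_or_isSquare_neg a := by
    have isSquare_of_map {a : R} (ha : IsSquare (algebraMap R L a)) : IsSquare a := by
      obtain ⟨x, hx⟩ := ha
      have hroot : aeval x (X ^ 2 - C a) = 0 := by simp [hx, sq]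
      obtain ⟨r, rfl⟩ := h x ⟨_, X_pow_sub_C_ne_zero two_pos a, hroot⟩
      exact ⟨r, (algebraMap R L).injective (by rw [hx, map_mul])⟩
    refine (IsRealClosed.isSquare_or_isSquare_neg (algebraMap R L a)).imp isSquare_of_map ?_
    exact fun ha ↦ isSquare_of_map (by rwa [map_neg])
  exists_isRoot_of_odd_natDegree {f} hf := by
    obtain ⟨x, hx⟩ := IsRealClosed.exists_isRoot_of_odd_natDegree
      (f := f.map (algebraMap R L)) (by rwa [natDegree_map])
    have hf0 : f ≠ 0 := ne_zero_of_natDegree_gt hf.pos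
    obtain ⟨r, rfl⟩ := h x ⟨f, hf0, by rwa [IsRoot, eval_map_algebraMap] at hx⟩
    exact ⟨r, hx.of_map (algebraMap R L).injective⟩

end ArtinSchreier

section AdjoinI

open Polynomial

/-- The field `R(i)`, for `R` a field in which `-1` is not a square. -/
abbrev AdjoinI (R : Type*) [Field R] := QuadraticAlgebra R (-1) 0

instance fact_sq_ne_neg_one {R : Type*} [Field R] [IsSemireal R] :
    Fact (∀ r : R, r ^ 2 ≠ -1 + 0 * r) :=
  ⟨fun r hr ↦ IsSemireal.one_add_ne_zero (IsSumSq.mul_self r) (by linear_combination hr)⟩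

theorem finrank_eq_one_of_forall_exists_isRoot {F K : Type*} [Field F] [Field K] [Algebra F K]
    [FiniteDimensional F K] [Algebra.IsSeparable F K]
    (h : ∀ p : F[X], p.natDegree = Module.finrank F K → ∃ x, p.IsRoot x) :
    Module.finrank F K = 1 := by
  obtain ⟨α, hα⟩ := Field.exists_primitive_element F K
  have hint : IsIntegral F α := Algebra.IsIntegral.isIntegral α
  have hdeg : (minpoly F α).natDegree = Module.finrank F K := by
    rw [← IntermediateField.adjoin.finrank hint, hα, IntermediateField.finrank_top']
  obtain ⟨x, hx⟩ := h _ hdeg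
  rw [← hdeg]
  exact natDegree_eq_of_degree_eq_some
    (degree_eq_one_of_irreducible_of_root (minpoly.irreducible hint) hx)

variable {R : Type*} [Field R] [IsRealClosed R]

theorem isSquare_adjoinI (z : AdjoinI R) : IsSquare z := by
  obtain ⟨_, _⟩ := exists_linearOrder_isStrictOrderedRing R
  have exists_sqrt {x : R} (hx : 0 ≤ x) : ∃ y, 0 ≤ y ∧ y ^ 2 = x := by
    obtain ⟨r, hr⟩ := IsRealClosed.exists_eq_pow_of_nonneg hx two_ne_zero
    exact ⟨|r|, abs_nonneg r, by rw [sq_abs, hr]⟩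
  obtain ⟨a, b⟩ := z
  obtain ⟨r, hr0, hr⟩ := exists_sqrt (add_nonneg (sq_nonneg a) (sq_nonneg b))
  obtain ⟨hra, har⟩ := abs_le.1 (abs_le_of_sq_le_sq (by linarith [sq_nonneg b] : a ^ 2 ≤ r ^ 2) hr0)
  obtain ⟨u, -, hu⟩ := exists_sqrt (x := (r + a) / 2) (by linarith)
  obtain ⟨v, -, hv⟩ := exists_sqrt (x := (r - a) / 2) (by linarith)
  have huv : (2 * u * v) ^ 2 = b ^ 2 := by
    linear_combination 4 * v ^ 2 * hu + 2 * (r + a) * hv + hr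
  obtain h | h := sq_eq_sq_iff_eq_or_eq_neg.1 huv
  · refine ⟨⟨u, v⟩, QuadraticAlgebra.ext ?_ ?_⟩
    · simp only [QuadraticAlgebra.re_mul]
      linear_combination hv - hu
    · simp only [QuadraticAlgebra.im_mul]
      linear_combination -h
  · refine ⟨⟨u, -v⟩, QuadraticAlgebra.ext ?_ ?_⟩
    · simp only [QuadraticAlgebra.re_mul]
      linear_combination hv - hu
    · simp only [QuadraticAlgebra.im_mul]
      linear_combination h

theorem finrank_adjoinI_ne_two {K : Type*} [Field K] [Algebra (AdjoinI R) K] :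
    Module.finrank (AdjoinI R) K ≠ 2 := by
  intro h
  have : FiniteDimensional (AdjoinI R) K := Module.finite_of_finrank_pos (by lia)
  have exists_isRoot (p : (AdjoinI R)[X]) (hp : p.natDegree = 2) : ∃ x, p.IsRoot x := by
    have hlc : p.coeff 2 ≠ 0 := by
      rw [← hp, coeff_natDegree, leadingCoeff_ne_zero]
      exact ne_zero_of_natDegree_gt (hp ▸ two_pos)
    obtain ⟨x, hx⟩ :=
      exists_quadratic_eq_zero hlc (isSquare_adjoinI (discrim _ (p.coeff 1) (p.coeff 0)))
    refine ⟨x, ?_⟩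
    rw [IsRoot, eval_eq_sum_range, hp]
    simp only [Finset.sum_range_succ, Finset.sum_range_zero]
    linear_combination hx
  have := finrank_eq_one_of_forall_exists_isRoot (h ▸ exists_isRoot)
  lia

theorem exists_finrank_eq_two_pow_of_isGalois (E : Type*) [Field E] [Algebra R E]
    [FiniteDimensional R E] [IsGalois R E] : ∃ k, Module.finrank R E = 2 ^ k := by
  have : Fact (Nat.Prime 2) := ⟨Nat.prime_two⟩
  obtain ⟨P⟩ : Nonempty (Sylow 2 Gal(E/R)) := inferInstance
  let F := IntermediateField.fixedField (P : Subgroup Gal(E/R))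
  have hRF : Module.finrank R F = 1 := by
    refine finrank_eq_one_of_forall_exists_isRoot fun p hp ↦
      IsRealClosed.exists_isRoot_of_odd_natDegree ?_
    rw [hp, IntermediateField.finrank_eq_fixingSubgroup_index,
      IntermediateField.fixingSubgroup_fixedField, ← Nat.not_even_iff_odd, even_iff_two_dvd]
    exact P.not_dvd_index
  obtain ⟨k, hk⟩ := P.2.exists_card_eq
  refine ⟨k, ?_⟩
  rw [← Module.finrank_mul_finrank R F E, hRF, one_mul,
    IntermediateField.finrank_fixedField_eq_card]
  exact hk

theorem finrank_adjoinI_eq_one_of_isGalois {E : Type*} [Field E] [Algebra R E]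
    [Algebra (AdjoinI R) E] [IsScalarTower R (AdjoinI R) E] [FiniteDimensional R E]
    [IsGalois R E] : Module.finrank (AdjoinI R) E = 1 := by
  have : FiniteDimensional (AdjoinI R) E := .right R (AdjoinI R) E
  have : IsGalois (AdjoinI R) E := .tower_top_of_isGalois R (AdjoinI R) E
  have : Fact (Nat.Prime 2) := ⟨Nat.prime_two⟩
  obtain ⟨k, hk⟩ := exists_finrank_eq_two_pow_of_isGalois (R := R) E
  have htower := Module.finrank_mul_finrank R (AdjoinI R) E
  rw [QuadraticAlgebra.finrank_eq_two, hk] at htower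
  obtain _ | _ | k := k
  · lia
  · lia
  have hCE : Module.finrank (AdjoinI R) E = 2 ^ (k + 1) := by
    rw [pow_succ' 2 (k + 1)] at htower
    lia
  obtain ⟨H, hH⟩ := Sylow.exists_subgroup_card_pow_prime (G := Gal(E/(AdjoinI R))) 2 (n := k) <| by
    rw [IsGalois.card_aut_eq_finrank, hCE]
    exact pow_dvd_pow 2 k.le_succ
  have hfix := Module.finrank_mul_finrank (AdjoinI R) (IntermediateField.fixedField H) E
  rw [IntermediateField.finrank_fixedField_eq_card, hH, hCE, pow_succ'] at hfix
  exact absurd (Nat.eq_of_mul_eq_mul_right (by positivity) hfix) finrank_adjoinI_ne_two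

instance isAlgClosed_adjoinI : IsAlgClosed (AdjoinI R) := by
  refine .of_exists_root _ fun p _ hp ↦ ?_
  have : Fact (Irreducible p) := ⟨hp⟩
  let K := AdjoinRoot p
  have : FiniteDimensional (AdjoinI R) K := (AdjoinRoot.powerBasis hp.ne_zero).finite
  have : FiniteDimensional R K := .trans R (AdjoinI R) K
  let Ω := AlgebraicClosure K
  have : Algebra.IsAlgebraic R Ω := .trans R K Ω
  have : IsAlgClosure R Ω := ⟨inferInstance, inferInstance⟩
  let E := IntermediateField.normalClosure R K Ω
  let _ : Algebra (AdjoinI R) E :=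
    ((algebraMap K E).comp (algebraMap (AdjoinI R) K)).toAlgebra
  have : IsScalarTower (AdjoinI R) K E := .of_algebraMap_eq' rfl
  have : IsScalarTower R (AdjoinI R) E := .of_algebraMap_eq fun x ↦ by
    rw [IsScalarTower.algebraMap_apply R K E, IsScalarTower.algebraMap_apply R (AdjoinI R) K]
    rfl
  have : IsGalois R E := {}
  have htower := Module.finrank_mul_finrank (AdjoinI R) K E
  rw [finrank_adjoinI_eq_one_of_isGalois (E := E)] at htower
  have hdeg : p.natDegree = 1 := by
    rw [← Nat.eq_one_of_mul_eq_one_right htower, (AdjoinRoot.powerBasis hp.ne_zero).finrank,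
      AdjoinRoot.powerBasis_dim]
  exact exists_root_of_degree_eq_one ((degree_eq_iff_natDegree_eq_of_pos one_pos).2 hdeg)

end AdjoinI

section RealClosedExtensions

open Polynomial

variable {R : Type*} [Field R] [IsRealClosed R]

theorem eq_X_sub_C_or_eq_sq_add_sq_of_irreducible {f : R[X]} (hm : f.Monic) (hf : Irreducible f) :
    (∃ u, f = X - C u) ∨ ∃ u v, v ≠ 0 ∧ f = (X - C u) ^ 2 + C v ^ 2 := by
  obtain ⟨⟨u, v⟩, hz⟩ := IsAlgClosed.exists_aeval_eq_zero (AdjoinI R) f hf.degree_pos.ne'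
  have hfz : f = minpoly R (⟨u, v⟩ : AdjoinI R) := minpoly.eq_of_irreducible_of_monic hf hz hm
  obtain rfl | hv := eq_or_ne v 0
  · exact .inl ⟨u, hfz.trans (minpoly.eq_X_sub_C (AdjoinI R) u)⟩
  refine .inr ⟨u, v, hv, ?_⟩
  have hroot : aeval (⟨u, v⟩ : AdjoinI R) ((X - C u) ^ 2 + C v ^ 2) = 0 := by
    ext <;> simp [sq]
  have hnotMem : (⟨u, v⟩ : AdjoinI R) ∉ (algebraMap R (AdjoinI R)).range := by
    rintro ⟨r, hr⟩
    exact hv (congrArg QuadraticAlgebra.im hr).symm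
  have hdeg : 2 ≤ f.natDegree := by
    rwa [hfz, minpoly.two_le_natDegree_iff (Algebra.IsIntegral.isIntegral _)]
  refine (eq_of_monic_of_dvd_of_natDegree_le hm ?_ (hfz ▸ minpoly.dvd R _ hroot) ?_).symm
  · monicity!
  · refine le_trans ?_ hdeg
    compute_degree!

theorem mem_range_algebraMap_of_isAlgebraic {L : Type*} [Field L] [IsSemireal L] [Algebra R L]
    {x : L} (hx : IsAlgebraic R x) : x ∈ (algebraMap R L).range := by
  have hroot := minpoly.aeval R x
  obtain ⟨u, h⟩ | ⟨u, v, hv, h⟩ := eq_X_sub_C_or_eq_sq_add_sq_of_irreducible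
    (minpoly.monic hx.isIntegral) (minpoly.irreducible hx.isIntegral)
  · rw [h, map_sub, aeval_X, aeval_C, sub_eq_zero] at hroot
    exact ⟨u, hroot.symm⟩
  · simp only [h, map_add, map_pow, map_sub, aeval_X, aeval_C] at hroot
    have := IsFormallyReal.eq_zero_of_add_left (IsSquare.sq _).isSumSq (IsSquare.sq _).isSumSq hroot
    simp [hv] at this

end RealClosedExtensions

section HermiteForm

open Polynomial
open scoped Finset

section Inertia

variable {L : Type*} [Field L] [LinearOrder L] [IsStrictOrderedRing L] {ι : Type*} [Fintype ι]

theorem card_filter_neg_le_of_forall_nonneg {τ : Type*} [Fintype τ] {a : ι → L}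
    (f : (ι → L) →ₗ[L] (τ → L)) (h : ∀ x, f x = 0 → 0 ≤ ∑ i, a i * x i ^ 2) :
    #{i | a i < 0} ≤ Fintype.card τ := by
  by_contra! hlt
  let e : {i // a i < 0} → ι := Subtype.val
  have hrank : Module.finrank L (τ → L) < Module.finrank L ({i // a i < 0} → L) := by
    simpa only [Module.finrank_fintype_fun_eq_card, Fintype.card_subtype] using hlt
  obtain ⟨x, hx, hx0⟩ := Submodule.exists_mem_ne_zero_of_ne_bot <|
    LinearMap.ker_ne_bot_of_finrank_lt (f := f ∘ₗ Function.ExtendByZero.linearMap L e) hrank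
  obtain ⟨j, hj⟩ := Function.ne_iff.1 hx0
  let y : ι → L := Function.extend e x 0
  have hy (i) : y (e i) = x i := Subtype.val_injective.extend_apply x 0 i
  have hay (i : ι) : a i * y i ^ 2 ≤ 0 := by
    by_cases hi : a i < 0
    · exact mul_nonpos_of_nonpos_of_nonneg hi.le (sq_nonneg _)
    · have : y i = 0 := Function.extend_apply' _ _ _ (by rintro ⟨k, rfl⟩; exact hi k.2)
      simp [this]
  refine (h y hx).not_gt (Finset.sum_neg' (fun i _ ↦ hay i) ⟨e j, Finset.mem_univ _, ?_⟩)
  rw [hy]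
  exact mul_neg_of_neg_of_pos j.2 (sq_pos_of_ne_zero hj)

theorem exists_finset_transversal_of_involutive {E : Type*} [Fintype E] [DecidableEq E]
    {c : E → E} (hc : Function.Involutive c) :
    ∃ T : Finset E, (∀ σ, c σ ≠ σ → σ ∈ T ∨ c σ ∈ T) ∧
      2 * #T + #{σ | c σ = σ} = Fintype.card E := by
  let _ : LinearOrder E := LinearOrder.lift' (Fintype.equivFin E) (Fintype.equivFin E).injective
  have hcard : #{σ | c σ < σ} = #{σ | σ < c σ} :=
    Finset.card_equiv hc.toPerm fun σ ↦ by simp [hc σ]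
  have hne : #{σ | c σ ≠ σ} = #{σ | c σ < σ} + #{σ | σ < c σ} := by
    rw [← Finset.card_union_of_disjoint, ← Finset.filter_or]
    · simp only [ne_iff_lt_or_gt]
    · exact Finset.disjoint_filter.2 fun σ _ h ↦ h.not_gt
  refine ⟨Finset.univ.filter fun σ ↦ σ < c σ, fun σ hσ ↦ ?_, ?_⟩
  · simpa [hc σ] using hσ.symm.lt_or_gt
  · rw [← Finset.card_univ,
      ← Finset.card_filter_add_card_filter_not (s := Finset.univ) fun σ ↦ c σ = σ, hne]
    lia

/-- By Sylvester's inertia argument, the negative coefficients are bounded through the common zeros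
of the `im σ`, the positive ones through those of the `re σ`, and the two bounds add up to
`Fintype.card ι`, so they are equalities. -/
theorem card_filter_pos_eq_add_card_fixed {E : Type*} [Fintype E] [DecidableEq E] {a : ι → L}
    (ha : ∀ i, a i ≠ 0) (hcard : Fintype.card E = Fintype.card ι) {c : E → E}
    (hc : Function.Involutive c) {re im : E → (ι → L) →ₗ[L] L}
    (hre : ∀ σ x, re (c σ) x = re σ x) (him : ∀ σ x, im (c σ) x = -im σ x)
    (hQ : ∀ x, ∑ i, a i * x i ^ 2 = ∑ σ, (re σ x ^ 2 - im σ x ^ 2)) :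
    #{i | 0 < a i} = #{i | a i < 0} + #{σ | c σ = σ} := by
  obtain ⟨T, hT, hTcard⟩ := exists_finset_transversal_of_involutive hc
  have hneg : #{i | a i < 0} ≤ #T := by
    refine (card_filter_neg_le_of_forall_nonneg (LinearMap.pi fun σ : T ↦ im σ)
      fun x hx ↦ ?_).trans_eq (Fintype.card_coe T)
    have him0 (σ) : im σ x = 0 := by
      by_cases hσ : c σ = σ
      · exact self_eq_neg.1 (by simpa only [hσ] using him σ x)
      obtain h | h := hT σ hσ
      · exact congrFun hx ⟨σ, h⟩
      · exact neg_eq_zero.1 ((him σ x).symm.trans (congrFun hx ⟨c σ, h⟩))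
    rw [hQ]
    exact Finset.sum_nonneg fun σ _ ↦ by simp [him0, sq_nonneg]
  have hpos : #{i | 0 < a i} ≤ #T + #{σ | c σ = σ} := by
    let S : Finset E := T ∪ Finset.univ.filter fun σ ↦ c σ = σ
    simp only [← neg_lt_zero (a := a _)]
    refine (card_filter_neg_le_of_forall_nonneg (LinearMap.pi fun σ : S ↦ re σ)
      fun x hx ↦ ?_).trans ((Fintype.card_coe S).trans_le (Finset.card_union_le _ _))
    have hre0 (σ) : re σ x = 0 := by
      by_cases hσ : c σ = σ
      · exact congrFun hx ⟨σ, by simp [S, hσ]⟩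
      obtain h | h := hT σ hσ
      · exact congrFun hx ⟨σ, by simp [S, h]⟩
      · exact (hre σ x).symm.trans (congrFun hx ⟨c σ, by simp [S, h]⟩)
    simp only [neg_mul, Finset.sum_neg_distrib, hQ, Left.nonneg_neg_iff]
    exact Finset.sum_nonpos fun σ _ ↦ by simp [hre0, sq_nonneg]
  have hsum := Finset.card_filter_add_card_filter_not (s := Finset.univ) fun i ↦ 0 < a i
  simp only [not_lt, (ha _).le_iff_lt, Finset.card_univ] at hsum
  lia

end Inertia

section TraceForm

variable {F K ι : Type*} [Field F] [Field K] [Algebra F K] [FiniteDimensional F K]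
  [Algebra.IsSeparable F K]

theorem sum_sq_sum_embeddings {Ω : Type*} [Field Ω] [Algebra F Ω] [IsAlgClosed Ω] [Fintype ι]
    {v : ι → K} (hv : (Algebra.traceForm F K).IsOrthoᵢ v) (x : ι → Ω) :
    ∑ σ : K →ₐ[F] Ω, (∑ i, x i * σ (v i)) ^ 2 =
      ∑ i, algebraMap F Ω (Algebra.trace F K (v i * v i)) * x i ^ 2 := by
  classical
  simp only [sq, Finset.sum_mul_sum]
  rw [Finset.sum_comm]
  refine Finset.sum_congr rfl fun i _ ↦ ?_
  rw [Finset.sum_comm, Finset.sum_eq_single i]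
  · rw [trace_eq_sum_embeddings Ω, Finset.sum_mul]
    exact Finset.sum_congr rfl fun σ _ ↦ by rw [map_mul]; ring
  · intro j _ hij
    have hij0 : Algebra.trace F K (v i * v j) = 0 := hv hij.symm
    calc ∑ σ : K →ₐ[F] Ω, x i * σ (v i) * (x j * σ (v j))
        = x i * x j * ∑ σ : K →ₐ[F] Ω, σ (v i * v j) := by
          rw [Finset.mul_sum]
          exact Finset.sum_congr rfl fun σ _ ↦ by rw [map_mul]; ring
      _ = 0 := by rw [← trace_eq_sum_embeddings, hij0, map_zero, mul_zero]
  · simp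

theorem trace_mul_self_ne_zero {v : Module.Basis ι F K} (hv : (Algebra.traceForm F K).IsOrthoᵢ v)
    (i : ι) : Algebra.trace F K (v i * v i) ≠ 0 :=
  hv.not_isOrtho_basis_self_of_separatingLeft (traceForm_nondegenerate F K).1 i

end TraceForm

section Embeddings

variable (F L : Type*) [Field F] [Field L] [Algebra F L]

/-- Complex conjugation on `L(i)`, as a homomorphism of algebras over a subfield of `L`. -/
def AdjoinI.conj : AdjoinI L →ₐ[F] AdjoinI L where
  toRingHom := starRingEnd (AdjoinI L)
  commutes' r := by
    rw [IsScalarTower.algebraMap_apply F L (AdjoinI L)]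
    change star (algebraMap L (AdjoinI L) _) = _
    ext <;> simp

variable {F L}

theorem AdjoinI.conj_apply (z : AdjoinI L) : AdjoinI.conj F L z = star z := rfl

theorem card_algHom_conj_fixed [IsSemireal L] {K : Type*} [Field K] [Algebra F K]
    [FiniteDimensional F K] [DecidableEq (K →ₐ[F] AdjoinI L)] :
    #{σ : K →ₐ[F] AdjoinI L | (AdjoinI.conj F L).comp σ = σ} = Nat.card (K →ₐ[F] L) := by
  let ι := IsScalarTower.toAlgHom F L (AdjoinI L)
  have hι : Function.Injective ι := ι.toRingHom.injective
  have hfixed (τ : K →ₐ[F] L) : (AdjoinI.conj F L).comp (ι.comp τ) = ι.comp τ := by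
    ext x <;> simp [ι, AdjoinI.conj_apply]
  rw [Nat.card_eq_fintype_card, ← Finset.card_univ]
  refine (Finset.card_bij (fun τ _ ↦ ι.comp τ) (fun τ _ ↦ by simpa using hfixed τ)
    (fun τ _ τ' _ h ↦ (AlgHom.cancel_left hι).1 h) fun σ hσ ↦ ?_).symm
  have hrange (x : K) : σ x ∈ ι.range := by
    have him := congrArg QuadraticAlgebra.im (DFunLike.congr_fun (Finset.mem_filter.1 hσ).2 x)
    simp only [AlgHom.comp_apply, AdjoinI.conj_apply, QuadraticAlgebra.im_star,
      neg_eq_self] at him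
    exact ⟨(σ x).re, QuadraticAlgebra.ext rfl him.symm⟩
  let e := AlgEquiv.ofInjective ι hι
  refine ⟨(e.symm : ι.range →ₐ[F] L).comp (σ.codRestrict ι.range hrange), Finset.mem_univ _, ?_⟩
  ext1 x
  exact congrArg Subtype.val (e.apply_symm_apply ⟨σ x, hrange x⟩)

end Embeddings

section Transfer

variable {F K L : Type*} [Field F] [CharZero F] [Field K] [Algebra F K] [FiniteDimensional F K]
  [Field L] [LinearOrder L] [IsStrictOrderedRing L] [IsRealClosed L] [Algebra F L]

/-- Hermite's theorem on the signature of the trace form. Over `L(i)` the form is a sum of squares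
`z σ ^ 2` indexed by the embeddings `σ`; a pair of conjugate embeddings contributes
`2 re² - 2 im²`, of signature zero, so only the real embeddings count. -/
theorem card_filter_trace_pos_eq_add_card_algHom {ι : Type*} [Fintype ι] {v : Module.Basis ι F K}
    (hv : (Algebra.traceForm F K).IsOrthoᵢ v) :
    #{i | 0 < algebraMap F L (Algebra.trace F K (v i * v i))} =
      #{i | algebraMap F L (Algebra.trace F K (v i * v i)) < 0} + Nat.card (K →ₐ[F] L) := by
  classical
  let z (σ : K →ₐ[F] AdjoinI L) : (ι → L) →ₗ[L] AdjoinI L :=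
    ∑ i, (LinearMap.proj i).smulRight (σ (v i))
  have hz (σ x) : z σ x = ∑ i, algebraMap L (AdjoinI L) (x i) * σ (v i) := by
    simp [z, Algebra.smul_def]
  have hzconj (σ x) : z ((AdjoinI.conj F L).comp σ) x = AdjoinI.conj L L (z σ x) := by
    simp only [hz, map_sum, map_mul, AlgHom.commutes]
    rfl
  rw [← card_algHom_conj_fixed]
  refine card_filter_pos_eq_add_card_fixed
    (fun i ↦ (_root_.map_ne_zero _).2 (trace_mul_self_ne_zero hv i))
    ((AlgHom.card F K (AdjoinI L)).trans (Module.finrank_eq_card_basis v))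
    (re := fun σ ↦ QuadraticAlgebra.reₗ (-1) 0 ∘ₗ z σ)
    (im := fun σ ↦ QuadraticAlgebra.imₗ (-1) 0 ∘ₗ z σ)
    (fun σ ↦ ?_) (fun σ x ↦ ?_) (fun σ x ↦ ?_) fun x ↦ ?_
  · ext x <;> simp [AdjoinI.conj_apply]
  · simp [hzconj, AdjoinI.conj_apply]
  · simp [hzconj, AdjoinI.conj_apply]
  · have hsum := sum_sq_sum_embeddings hv fun i ↦ algebraMap L (AdjoinI L) (x i)
    simp only [← hz, IsScalarTower.algebraMap_apply F L (AdjoinI L), ← map_pow, ← map_mul] at hsum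
    replace hsum := congrArg (QuadraticAlgebra.reₗ (-1) 0) hsum
    simp only [map_sum, QuadraticAlgebra.reₗ_apply, QuadraticAlgebra.algebraMap_re] at hsum
    rw [← hsum]
    refine Finset.sum_congr rfl fun σ _ ↦ ?_
    simp only [sq, QuadraticAlgebra.re_mul, LinearMap.comp_apply, QuadraticAlgebra.reₗ_apply,
      QuadraticAlgebra.imₗ_apply]
    ring

theorem nonempty_algHom_of_pos_iff_pos {L' : Type*} [Field L'] [LinearOrder L']
    [IsStrictOrderedRing L'] [IsRealClosed L'] [Algebra F L']
    (hpos : ∀ a : F, 0 < algebraMap F L a ↔ 0 < algebraMap F L' a)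
    (h : Nonempty (K →ₐ[F] L)) : Nonempty (K →ₐ[F] L') := by
  have hneg (a : F) : algebraMap F L a < 0 ↔ algebraMap F L' a < 0 := by simpa using hpos (-a)
  have : Invertible (2 : F) := invertibleOfNonzero two_ne_zero
  obtain ⟨v, hv⟩ :=
    LinearMap.BilinForm.exists_orthogonal_basis
      (LinearMap.BilinForm.isSymm_iff.1 (Algebra.traceForm_isSymm F (S := K)))
  have hL := card_filter_trace_pos_eq_add_card_algHom (L := L) hv
  have hL' := card_filter_trace_pos_eq_add_card_algHom (L := L') hv
  simp only [hpos, hneg] at hL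
  have : 0 < Nat.card (K →ₐ[F] L) := Nat.card_pos
  exact (Nat.card_pos_iff.1 (by lia)).1

end Transfer

end HermiteForm

section Cuts

open Polynomial Filter

section Sign

variable {R L : Type*} [Field R] [LinearOrder R] [IsStrictOrderedRing R] [IsRealClosed R]
  [Field L] [LinearOrder L] [IsStrictOrderedRing L] [Algebra R L]

theorem strictMono_algebraMap : StrictMono (algebraMap R L) := by
  intro a b hab
  obtain ⟨y, hy⟩ := IsRealClosed.exists_eq_pow_of_nonneg (sub_nonneg.2 hab.le) two_ne_zero
  rw [← sub_pos, ← map_sub, hy, map_pow]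
  refine sq_pos_of_ne_zero ((_root_.map_ne_zero _).2 ?_)
  rintro rfl
  simp [hab.ne', sub_eq_zero] at hy

theorem sign_eval_eq_of_forall_roots {p : R[X]} {c : R} {t : L}
    (h : ∀ r ∈ p.roots, SignType.sign (c - r) = SignType.sign (t - algebraMap R L r)) :
    SignType.sign (eval c p) = SignType.sign (aeval t p) := by
  have sign_C (a : R) : SignType.sign (eval c (C a)) = SignType.sign (aeval t (C a)) := by
    rw [eval_C, aeval_C, strictMono_algebraMap.sign_comp]
  induction p using WfDvdMonoid.induction_on_irreducible with
  | zero => simp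
  | unit p hp =>
    obtain ⟨a, -, rfl⟩ := isUnit_iff.1 hp
    exact sign_C a
  | mul p q hp0 hq ih =>
    rw [roots_mul (mul_ne_zero hq.ne_zero hp0)] at h
    obtain ⟨a, f, hmonic, rfl⟩ : ∃ a f, Monic f ∧ q = C a * f :=
      ⟨_, _, monic_mul_leadingCoeff_inv hq.ne_zero, by
        rw [mul_left_comm, ← C_mul, mul_inv_cancel₀ (leadingCoeff_ne_zero.2 hq.ne_zero), C_1,
          mul_one]⟩
    have ha : IsUnit (C a) := isUnit_C.2 (.mk0 a (by rintro rfl; simp at hq))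
    simp only [eval_mul, map_mul, sign_mul, sign_C,
      ih fun r hr ↦ h r (Multiset.mem_add.2 (.inr hr))]
    congr 2
    obtain ⟨u, rfl⟩ | ⟨u, v, hv, rfl⟩ :=
      eq_X_sub_C_or_eq_sq_add_sq_of_irreducible hmonic ((irreducible_isUnit_mul ha).1 hq)
    · simpa using h u (Multiset.mem_add.2 (.inl ((mem_roots hq.ne_zero).2 (by simp))))
    · have hv' : algebraMap R L v ≠ 0 := (_root_.map_ne_zero _).2 hv
      simp only [eval_add, eval_sub, eval_pow, eval_X, eval_C, map_add, map_sub, map_pow, aeval_X,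
        aeval_C]
      rw [sign_pos (by positivity), sign_pos (by positivity)]

theorem exists_forall_sign_eval_eq (Q : Finset R[X]) (t : L) :
    ∃ c : R, ∀ p ∈ Q, SignType.sign (eval c p) = SignType.sign (aeval t p) := by
  classical
  obtain ⟨r, rfl⟩ | ht := em (t ∈ Set.range (algebraMap R L))
  · exact ⟨r, fun p _ ↦ by
      rw [aeval_algebraMap_apply_eq_algebraMap_eval, strictMono_algebraMap.sign_comp]⟩
  let S : Finset R := Q.biUnion fun p ↦ p.roots.toFinset
  obtain ⟨c, hlo, hhi⟩ := Order.exists_between_finsets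
    {r ∈ S | algebraMap R L r < t} {r ∈ S | t < algebraMap R L r} fun a ha b hb ↦
      (strictMono_algebraMap (L := L)).lt_iff_lt.1
        ((Finset.mem_filter.1 ha).2.trans (Finset.mem_filter.1 hb).2)
  refine ⟨c, fun p hp ↦ sign_eval_eq_of_forall_roots fun r hr ↦ ?_⟩
  have hrS : r ∈ S := Finset.mem_biUnion.2 ⟨p, hp, Multiset.mem_toFinset.2 hr⟩
  obtain h | h := lt_or_gt_of_ne fun h : algebraMap R L r = t ↦ ht ⟨r, h⟩
  · rw [sign_pos (sub_pos.2 h), sign_pos (sub_pos.2 (hlo r (Finset.mem_filter.2 ⟨hrS, h⟩)))]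
  · rw [sign_neg (sub_neg.2 h), sign_neg (sub_neg.2 (hhi r (Finset.mem_filter.2 ⟨hrS, h⟩)))]

theorem exists_ultrafilter_eventually_sign_eval_eq (t : L) : ∃ U : Ultrafilter R,
    ∀ p : R[X], ∀ᶠ c in (U : Filter R), SignType.sign (eval c p) = SignType.sign (aeval t p) := by
  classical
  choose c hc using exists_forall_sign_eval_eq (R := R) (t := t)
  refine ⟨.of (atTop.map c), fun p ↦ Ultrafilter.of_le _ ?_⟩
  exact (eventually_ge_atTop {p}).mono fun Q hQ ↦ hc Q p (Finset.singleton_subset_iff.1 hQ)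

end Sign

section Germ

variable {α R : Type*}

instance algebraGerm [CommSemiring R] {l : Filter α} : Algebra R (Germ l R) where
  algebraMap := (Germ.coeRingHom l).comp (Pi.constRingHom α R)
  commutes' _ _ := mul_comm _ _
  smul_def' _ x := Quotient.inductionOn' x fun _ ↦ rfl

theorem aeval_germ [CommSemiring R] {l : Filter α} (f : α → R) (p : R[X]) :
    aeval (f : Germ l R) p = ((fun c ↦ eval (f c) p : α → R) : Germ l R) := by
  let φ : (α → R) →ₐ[R] Germ l R := { Germ.coeRingHom l with commutes' := fun _ ↦ rfl }
  refine (aeval_algHom_apply φ f p).trans (congrArg φ (funext fun c ↦ ?_))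
  exact (aeval_algHom_apply (Pi.evalAlgHom R (fun _ : α ↦ R) c) f p).symm

theorem mvPolynomial_aeval_germ [CommSemiring R] {σ : Type*} {l : Filter α} (f : σ → α → R)
    (p : MvPolynomial σ R) : MvPolynomial.aeval (fun i ↦ (f i : Germ l R)) p =
      ((fun c ↦ MvPolynomial.eval (fun i ↦ f i c) p : α → R) : Germ l R) := by
  let φ : (α → R) →ₐ[R] Germ l R := { Germ.coeRingHom l with commutes' := fun _ ↦ rfl }
  refine (MvPolynomial.comp_aeval_apply f φ p).symm.trans (congrArg φ (funext fun c ↦ ?_))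
  exact MvPolynomial.comp_aeval_apply f (Pi.evalAlgHom R (fun _ : α ↦ R) c) p

variable [Field R] [LinearOrder R]

theorem sign_germ_eq {U : Ultrafilter α} {f : α → R} {s : SignType}
    (h : ∀ᶠ c in (U : Filter α), SignType.sign (f c) = s) :
    SignType.sign (f : Germ (U : Filter α) R) = s := by
  cases s with
  | zero => exact sign_eq_zero_iff.2 (Germ.coe_eq.2 (h.mono fun c ↦ sign_eq_zero_iff.1))
  | neg => exact sign_eq_neg_one_iff.2 (Germ.coe_lt.2 (h.mono fun c ↦ sign_eq_neg_one_iff.1))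
  | pos => exact sign_eq_one_iff.2 (Germ.coe_pos.2 (h.mono fun c ↦ sign_eq_one_iff.1))

theorem exists_germ_isRoot_of_odd_natDegree [IsRealClosed R] {U : Ultrafilter α}
    {f : (Germ (U : Filter α) R)[X]} (hf : Odd f.natDegree) : ∃ x, f.IsRoot x := by
  let φ : (α → R) →+* Germ (U : Filter α) R := Germ.coeRingHom (U : Filter α)
  let ev (c : α) : (α → R) →+* R := Pi.evalRingHom (fun _ ↦ R) c
  have hφ : Function.Surjective φ := Quotient.mk_surjective
  obtain ⟨q, rfl, hdeg⟩ := exists_degree_eq_of_mem_lifts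
    ((lifts_iff_coeff_lifts f).2 fun n ↦ hφ _)
  replace hdeg := natDegree_eq_of_degree_eq hdeg
  rw [← hdeg] at hf
  have hlc : ∀ᶠ c in (U : Filter α), ev c q.leadingCoeff ≠ 0 := by
    rw [Ultrafilter.eventually_not]
    intro h
    have : φ q.leadingCoeff ≠ 0 := by
      rw [leadingCoeff, hdeg, ← coeff_map]
      exact leadingCoeff_ne_zero.2 (ne_zero_of_natDegree_gt (hdeg ▸ hf.pos))
    exact this (Germ.coe_eq.2 h)
  have hroot (c : α) : ∃ r, ev c q.leadingCoeff ≠ 0 → (q.map (ev c)).IsRoot r := by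
    by_cases h : ev c q.leadingCoeff = 0
    · exact ⟨0, absurd h⟩
    · obtain ⟨r, hr⟩ := IsRealClosed.exists_isRoot_of_odd_natDegree (f := q.map (ev c))
        (by rwa [natDegree_map_of_leadingCoeff_ne_zero _ h])
      exact ⟨r, fun _ ↦ hr⟩
  choose r hr using hroot
  refine ⟨φ r, ?_⟩
  rw [IsRoot, eval_map_apply]
  refine Germ.coe_eq.2 (hlc.mono fun c hc ↦ ?_)
  have := hr c hc
  rwa [IsRoot, show r c = ev c r from rfl, eval_map_apply] at this

instance isRealClosed_germ [IsStrictOrderedRing R] [IsRealClosed R] {U : Ultrafilter α} :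
    IsRealClosed (Germ (U : Filter α) R) :=
  .of_linearOrderedField
    (fun {x} ↦ Quotient.inductionOn' x fun f hf ↦ by
      have hsq (c : α) : ∃ y, 0 ≤ f c → f c = y * y := by
        by_cases h : 0 ≤ f c
        · obtain ⟨y, hy⟩ := IsSquare.of_nonneg h
          exact ⟨y, fun _ ↦ hy⟩
        · exact ⟨0, fun h' ↦ absurd h' h⟩
      choose y hy using hsq
      exact ⟨(y : Germ (U : Filter α) R), Germ.coe_eq.2 ((Germ.coe_nonneg.1 hf).mono hy)⟩)
    exists_germ_isRoot_of_odd_natDegree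

end Germ

theorem sign_div {K : Type*} [Field K] [LinearOrder K] [IsStrictOrderedRing K] (x y : K) :
    SignType.sign (x / y) = SignType.sign x / SignType.sign y :=
  map_div₀ signHom x y

theorem exists_algHom_adjoin_simple_sign_eq {R L L' : Type*} [Field R]
    [Field L] [LinearOrder L] [IsStrictOrderedRing L] [Algebra R L]
    [Field L'] [LinearOrder L'] [IsStrictOrderedRing L'] [Algebra R L']
    {t : L} {t' : L'} (ht : Transcendental R t)
    (h : ∀ p : R[X], SignType.sign (aeval t' p) = SignType.sign (aeval t p)) :
    ∃ Ψ : IntermediateField.adjoin R {t} →ₐ[R] L',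
      ∀ a, SignType.sign (Ψ a) = SignType.sign (a : L) := by
  have ht' : Transcendental R t' := transcendental_iff.2 fun p hp ↦
    transcendental_iff.1 ht p (by rw [← sign_eq_zero_iff, ← h, hp, sign_zero])
  let e := RatFunc.algEquivOfTranscendental t ht
  let e' := RatFunc.algEquivOfTranscendental t' ht'
  refine ⟨(IntermediateField.val _).comp (e'.toAlgHom.comp e.symm.toAlgHom), fun a ↦ ?_⟩
  obtain ⟨f, rfl⟩ := e.surjective a
  simp [e, e', RatFunc.algEquivOfTranscendental_apply, sign_div, h]

end Cuts

section ArtinLang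

open MvPolynomial Filter IntermediateField

theorem exists_eval_eq_zero_of_transcendental {R L σ : Type*} [Finite σ]
    [Field R] [LinearOrder R] [IsStrictOrderedRing R] [IsRealClosed R]
    [Field L] [LinearOrder L] [IsStrictOrderedRing L] [IsRealClosed L] [Algebra R L]
    {t : L} (ht : Transcendental R t) {x : σ → L} (hx : ∀ i, IsAlgebraic R⟮t⟯ (x i))
    {p : MvPolynomial σ R} (hp : aeval x p = 0) :
    ∃ y : σ → R, eval y p = 0 := by
  obtain ⟨U, hU⟩ := exists_ultrafilter_eventually_sign_eval_eq (R := R) t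
  obtain ⟨Ψ, hΨ⟩ := exists_algHom_adjoin_simple_sign_eq (L' := Germ (U : Filter R) R)
    (t' := ((fun c ↦ c : R → R) : Germ (U : Filter R) R)) ht fun q ↦ by
      rw [aeval_germ, sign_germ_eq (hU q)]
  let : Algebra R⟮t⟯ (Germ (U : Filter R) R) := Ψ.toAlgebra
  have : IsScalarTower R R⟮t⟯ (Germ (U : Filter R) R) := .of_algHom Ψ
  have hpos (a : R⟮t⟯) : 0 < (a : L) ↔ 0 < Ψ a := by
    rw [← sign_eq_one_iff, ← hΨ, sign_eq_one_iff]
  let K := adjoin R⟮t⟯ (Set.range x)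
  have : FiniteDimensional R⟮t⟯ K :=
    finiteDimensional_adjoin (by rintro _ ⟨i, rfl⟩; exact (hx i).isIntegral)
  obtain ⟨ρ⟩ : Nonempty (K →ₐ[R⟮t⟯] Germ (U : Filter R) R) :=
    nonempty_algHom_of_pos_iff_pos hpos ⟨K.val⟩
  let x' (i : σ) : K := ⟨x i, subset_adjoin _ _ ⟨i, rfl⟩⟩
  have hx' : aeval x' p = 0 := Subtype.ext <|
    (comp_aeval_apply x' (K.val.restrictScalars R) p).trans hp
  have hrep (z : Germ (U : Filter R) R) : ∃ f : R → R, f = z := Quotient.exists_rep z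
  choose f hf using fun i ↦ hrep (ρ (x' i))
  have hfp : aeval (fun i ↦ (f i : Germ (U : Filter R) R)) p = 0 := by
    rw [funext hf]
    refine (comp_aeval_apply x' (ρ.restrictScalars R) p).symm.trans ?_
    rw [hx', map_zero]
  rw [mvPolynomial_aeval_germ] at hfp
  obtain ⟨c, hc⟩ := (Germ.coe_eq.1 hfp).exists
  exact ⟨fun i ↦ f i c, hc⟩

theorem exists_eval_eq_zero_of_isAlgebraic_adjoin_simple {R L σ : Type*} [Finite σ]
    [Field R] [IsRealClosed R] [Field L] [IsRealClosed L] [Algebra R L]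
    {t : L} {x : σ → L} (hx : ∀ i, IsAlgebraic R⟮t⟯ (x i))
    {p : MvPolynomial σ R} (hp : aeval x p = 0) :
    ∃ y : σ → R, eval y p = 0 := by
  obtain ⟨_, _⟩ := exists_linearOrder_isStrictOrderedRing R
  obtain ⟨_, _⟩ := exists_linearOrder_isStrictOrderedRing L
  by_cases ht : Transcendental R t
  · exact exists_eval_eq_zero_of_transcendental ht hx hp
  have : Algebra.IsAlgebraic R R⟮t⟯ := isAlgebraic_adjoin_simple (not_not.1 ht).isIntegral
  choose y hy using fun i ↦ mem_range_algebraMap_of_isAlgebraic ((hx i).restrictScalars R)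
  refine ⟨y, (algebraMap R L).injective ?_⟩
  rw [map_zero, ← hp, ← funext hy]
  exact comp_aeval_apply y (Algebra.ofId R L) p

theorem isRealClosed_algebraicClosure {F L : Type*} [Field F] [Field L] [IsRealClosed L]
    [Algebra F L] : IsRealClosed (algebraicClosure F L) :=
  isRealClosed_of_algebraic_mem_range (L := L) fun x hx ↦ by
    have h : x ∈ algebraicClosure (algebraicClosure F L) L := mem_algebraicClosure_iff.2 hx
    rwa [algebraicClosure.algebraicClosure_eq_bot] at h

theorem aeval_aeval_cons_C_X {R M B : Type*} [CommSemiring R] [CommSemiring M] [CommSemiring B]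
    [Algebra R M] [Algebra R B] [Algebra M B] [IsScalarTower R M B] {n : ℕ} (a : M)
    (w : Fin n → B) (p : MvPolynomial (Fin (n + 1)) R) :
    aeval w (aeval
      (Fin.cons (C a) X : Fin (n + 1) → MvPolynomial (Fin n) M) p) =
      aeval (Fin.cons (algebraMap M B a) w : Fin (n + 1) → B) p := by
  refine (comp_aeval_apply _
    ((aeval w : _ →ₐ[M] B).restrictScalars R) p).trans ?_
  congr 2 with i
  cases i using Fin.cases <;> simp

theorem exists_eval_eq_zero_of_aeval_eq_zero {R L : Type u} [Field R] [IsRealClosed R]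
    [Field L] [IsRealClosed L] [Algebra R L] {n : ℕ} {p : MvPolynomial (Fin n) R} {x : Fin n → L}
    (hp : aeval x p = 0) : ∃ y : Fin n → R, eval y p = 0 := by
  induction n generalizing R with
  | zero => exact exists_eval_eq_zero_of_isAlgebraic_adjoin_simple (t := (0 : L)) finZeroElim hp
  | succ n ih =>
    let M := algebraicClosure R⟮x 0⟯ L
    have : IsRealClosed M := isRealClosed_algebraicClosure
    have : IsScalarTower R M L := .of_algebraMap_eq fun _ ↦ rfl
    let x₀ : M := algebraMap R⟮x 0⟯ M (AdjoinSimple.gen R (x 0))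
    rw [← Fin.cons_self_tail x] at hp
    obtain ⟨y, hy⟩ := ih (R := M) ((aeval_aeval_cons_C_X x₀ (Fin.tail x) p).trans hp)
    rw [← coe_aeval_eq_eval, RingHom.coe_coe, aeval_aeval_cons_C_X] at hy
    let z : Fin (n + 1) → M := Fin.cons x₀ y
    refine exists_eval_eq_zero_of_isAlgebraic_adjoin_simple (t := x 0) (x := fun i ↦ (z i : L))
      (fun i ↦ mem_algebraicClosure_iff.1 (z i).2) ?_
    rw [← map_zero (IsScalarTower.toAlgHom R M L), ← hy]
    exact (comp_aeval_apply _ (IsScalarTower.toAlgHom R M L) p).symm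

end ArtinLang

section Nullstellensatz

open MvPolynomial

theorem exists_ringHom_isRealClosed_ne_zero {A : Type u} [CommRing A] {g : A}
    (h : ∀ k s, IsSumSq s → g ^ (2 * k) + s ≠ 0) :
    ∃ (L : Type u) (_ : Field L) (φ : A →+* L), IsRealClosed L ∧ φ g ≠ 0 := by
  have := isSemireal_localizationAway h
  obtain ⟨κ, _, _, ⟨φ⟩⟩ := exists_ringHom_semireal_field (Localization.Away g)
  obtain ⟨L, _, _, hL⟩ := exists_isRealClosed_extension κ
  have hg : IsUnit (algebraMap A (Localization.Away g) g) :=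
    IsLocalization.Away.algebraMap_isUnit g
  exact ⟨L, _, (algebraMap κ L).comp (φ.comp (algebraMap A (Localization.Away g))), hL,
    ((hg.map φ).map (algebraMap κ L)).ne_zero⟩

variable {R L : Type u} [Field R] [IsRealClosed R] [Field L] [IsRealClosed L] [Algebra R L]
  {n : ℕ} {I : Ideal (MvPolynomial (Fin n) R)} {x : Fin n → L}

theorem exists_forall_mem_eval_eq_zero (hI : ∀ p ∈ I, aeval x p = 0) :
    ∃ y : Fin n → R, ∀ p ∈ I, eval y p = 0 := by
  obtain ⟨_, _⟩ := exists_linearOrder_isStrictOrderedRing R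
  obtain ⟨S, rfl⟩ := IsNoetherian.noetherian I
  obtain ⟨y, hy⟩ := exists_eval_eq_zero_of_aeval_eq_zero (p := ∑ q ∈ S, q ^ 2)
    (hI _ (sum_mem fun q hq ↦ Ideal.pow_mem_of_mem _ (Submodule.subset_span hq) 2 two_pos))
  rw [map_sum, Finset.sum_eq_zero_iff_of_nonneg fun q _ ↦ by rw [map_pow]; positivity] at hy
  suffices Ideal.span S ≤ RingHom.ker (eval y) from ⟨y, this⟩
  refine Ideal.span_le.2 fun q hq ↦ pow_eq_zero_iff two_ne_zero |>.1 ?_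
  rw [← map_pow, hy q hq]

theorem exists_forall_mem_eval_eq_zero_and_eval_ne_zero {g : MvPolynomial (Fin n) R}
    (hI : ∀ p ∈ I, aeval x p = 0) (hg : aeval x g ≠ 0) :
    ∃ y : Fin n → R, (∀ p ∈ I, eval y p = 0) ∧ eval y g ≠ 0 := by
  -- Rabinowitsch's trick
  let J : Ideal (MvPolynomial (Fin (n + 1)) R) :=
    I.map (rename Fin.succ) ⊔ Ideal.span {rename Fin.succ g * X 0 - 1}
  let z : Fin (n + 1) → L := Fin.cons (aeval x g)⁻¹ x
  have hzx : z ∘ Fin.succ = x := rfl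
  have hJ : J ≤ RingHom.ker (aeval z) := by
    refine sup_le (Ideal.map_le_iff_le_comap.2 fun p hp ↦ ?_)
      ((Ideal.span_singleton_le_iff_mem _).2 ?_)
    · simpa [aeval_rename, hzx] using hI p hp
    · simp [aeval_rename, hzx, z, hg]
  obtain ⟨y, hy⟩ := exists_forall_mem_eval_eq_zero hJ
  refine ⟨y ∘ Fin.succ, fun p hp ↦ ?_, fun h ↦ ?_⟩
  · rw [← eval_rename]
    exact hy _ (Ideal.mem_sup_left (Ideal.mem_map_of_mem _ hp))
  · have := hy _ (Ideal.mem_sup_right (Ideal.mem_span_singleton_self _))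
    simp [eval_rename, h] at this

theorem eq_zero_of_pow_add_sum_sq_eq_zero {k ℓ : ℕ} {a : R} {f : Fin ℓ → R}
    (h : a ^ (2 * k) + ∑ i, f i ^ 2 = 0) : a = 0 := by
  obtain ⟨_, _⟩ := exists_linearOrder_isStrictOrderedRing R
  have h₁ : 0 ≤ (a ^ k) ^ 2 := sq_nonneg _
  have h₂ : 0 ≤ ∑ i, f i ^ 2 := Finset.sum_nonneg fun i _ ↦ sq_nonneg _
  rw [mul_comm, pow_mul] at h
  exact eq_zero_of_pow_eq_zero (eq_zero_of_pow_eq_zero (by linarith : (a ^ k) ^ 2 = 0))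

theorem exists_eval_ne_zero_of_forall_pow_add_notMem {g : MvPolynomial (Fin n) R}
    (h : ∀ k s, IsSumSq s → g ^ (2 * k) + s ∉ I) :
    ∃ y : Fin n → R, (∀ p ∈ I, eval y p = 0) ∧ eval y g ≠ 0 := by
  obtain ⟨L, _, φ, _, hφ⟩ := exists_ringHom_isRealClosed_ne_zero (g := Ideal.Quotient.mk I g) <| by
    intro k s hs h0
    obtain ⟨s, hs', rfl⟩ := exists_isSumSq_map_eq Ideal.Quotient.mk_surjective hs
    rw [← map_pow, ← map_add, Ideal.Quotient.eq_zero_iff_mem] at h0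
    exact h k s hs' h0
  let ψ : MvPolynomial (Fin n) R →+* L := φ.comp (Ideal.Quotient.mk I)
  let : Algebra R L := (ψ.comp C).toAlgebra
  let ψ' : MvPolynomial (Fin n) R →ₐ[R] L := { ψ with commutes' := fun _ ↦ rfl }
  have hψ (p) : aeval (fun i ↦ ψ (X i)) p = ψ p := (DFunLike.congr_fun (aeval_unique ψ') p).symm
  refine exists_forall_mem_eval_eq_zero_and_eval_ne_zero (x := fun i ↦ ψ (X i))
    (fun p hp ↦ ?_) (by rwa [hψ])
  rw [hψ, RingHom.comp_apply, Ideal.Quotient.eq_zero_iff_mem.2 hp, map_zero]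

end Nullstellensatz

theorem real_nullstellensatz_general {R : Type*} [Field R] [IsRealClosed R] (n : ℕ)
    (I : Ideal (MvPolynomial (Fin n) R)) (g : MvPolynomial (Fin n) R) :
    (∀ x, (∀ p ∈ I, MvPolynomial.eval x p = 0) → MvPolynomial.eval x g = 0) ↔
      ∃ k : ℕ, 1 ≤ k ∧ ∃ (ℓ : ℕ) (gi : Fin ℓ → MvPolynomial (Fin n) R),
        g ^ (2 * k) + ∑ i, (gi i) ^ 2 ∈ I := by
  constructor
  · intro hg
    by_contra! hI
    obtain ⟨x, hx, hxg⟩ := exists_eval_ne_zero_of_forall_pow_add_notMem (I := I) (g := g) <| by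
      intro k s hs hmem
      obtain ⟨ℓ, f, hf⟩ := isSumSq_iff_exists_sum_sq.1 ((IsSumSq.mul_self g).mul hs)
      refine hI (k + 1) (by lia) ℓ f ?_
      convert I.mul_mem_left (g * g) hmem using 1
      rw [← hf]
      ring
    exact hxg (hg x hx)
  · rintro ⟨k, -, ℓ, f, hmem⟩ x hx
    have h := hx _ hmem
    simp only [map_add, map_pow, map_sum] at h
    exact eq_zero_of_pow_add_sum_sq_eq_zero h

instance isRealClosed_real : IsRealClosed ℝ :=
  .of_linearOrderedField (fun hx ↦ ⟨_, (Real.mul_self_sqrt hx).symm⟩) fun hf ↦ by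
    obtain ⟨g, hg, hgf, hodd⟩ := exists_irreducible_dvd_of_odd_natDegree hf
    have hle := hg.natDegree_le_two
    have hdeg : g.natDegree = 1 := by grind
    obtain ⟨x, hx⟩ := Polynomial.exists_root_of_degree_eq_one <|
      (Polynomial.degree_eq_iff_natDegree_eq_of_pos one_pos).2 hdeg
    exact ⟨x, hx.dvd hgf⟩

/-- The Real Nullstellensatz: `𝓘(Z(I)) = ʳ√I`. -/
theorem real_nullstellensatz (n : ℕ) (I : Ideal (MvPolynomial (Fin n) ℝ)) :
    {g : MvPolynomial (Fin n) ℝ | ∀ x ∈ zeroSet n I, MvPolynomial.eval x g = 0} =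
      realRadical n I :=
  Set.ext fun g ↦ real_nullstellensatz_general n I g
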